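/- arXiv:1510.04523 — 5 statements merged into one kernel-verified Lean document; each statement's English description precedes it below -/
import Mathlib

section
/- Let 1 ≤ n < N be integers, p > 1, and let K : (ℝ^N)^{n+2} → [0,∞) be such that K^p is a proper integrand. If E ⊂ ℝ^N is a Borel set with M_{K^p}(E) < ∞, then H^n(E ∩ B) < ∞ for every closed ball B ⊂ ℝ^N. -/
open MeasureTheory Metric Set
open scoped NNReal ENNReal

noncomputable section

/-- `x 0, …, x m` span an `(m,σ)`-simplex: the distance from each vertex to the affine
span of the remaining vertices is at least `σ`. -/
def IsHSimplex (N : ℕ) {m : ℕ} (σ : ℝ) (x : Fin (m + 1) → EuclideanSpace ℝ (Fin N)) : Prop :=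
  ∀ i : Fin (m + 1),
    σ ≤ Metric.infDist (x i)
      (affineSpan ℝ (x '' ({i}ᶜ : Set (Fin (m + 1)))) : Set (EuclideanSpace ℝ (Fin N)))

/-- The integral Menger curvature `M_{K^p}(μ) = ∫⋯∫ K^p dμ ⋯ dμ`. -/
def MengerEnergy (N n : ℕ) (p : ℝ) (K : (Fin (n + 2) → EuclideanSpace ℝ (Fin N)) → ℝ)
    (μ : Measure (EuclideanSpace ℝ (Fin N))) : ℝ≥0∞ :=
  ∫⁻ z, ENNReal.ofReal (K z ^ p) ∂(Measure.pi fun _ : Fin (n + 2) => μ)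

/-- `K^p` is a proper integrand. -/
def ProperIntegrand (N n : ℕ) (p : ℝ)
    (K : (Fin (n + 2) → EuclideanSpace ℝ (Fin N)) → ℝ) : Prop :=
  (∀ z, 0 ≤ K z) ∧ Measurable K ∧
  (∃ c : ℝ, 1 ≤ c ∧ ∃ l : ℝ, 1 ≤ l ∧
    ∀ t : ℝ, 0 < t → ∀ C : ℝ, 1 ≤ C → ∀ x : EuclideanSpace ℝ (Fin N),
      ∀ y : Fin (n + 1) → EuclideanSpace ℝ (Fin N),
        IsHSimplex N (t / C) y →
        convexHull ℝ (Set.range y) ⊆ Metric.closedBall x (C * t) →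
        ∀ w ∈ Metric.closedBall x (C * t),
          (Metric.infDist w (affineSpan ℝ (Set.range y) : Set (EuclideanSpace ℝ (Fin N))) / t) ^ p
            ≤ c * C ^ l * t ^ (n * (n + 1)) * K (Fin.snoc y w) ^ p) ∧
  (∀ t : ℝ, 0 < t → ∀ z : Fin (n + 2) → EuclideanSpace ℝ (Fin N),
      t ^ (n * (n + 1)) * K (fun i => t • z i) ^ p = K z ^ p) ∧
  (∀ b : EuclideanSpace ℝ (Fin N), ∀ z : Fin (n + 2) → EuclideanSpace ℝ (Fin N),
      K (fun i => z i + b) = K z)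

/-- If a weighted countable sum of indicators of measurable boxes is at least `d` on a box, then
the corresponding inequality holds for products of measures. No finiteness of the measures is
needed. -/
theorem mul_prod_measure_le_tsum_of_cover {X : Type*} [MeasurableSpace X] (μ : Measure X) :
    ∀ (k : ℕ) (A : Fin k → Set X) (B : ℕ → Fin k → Set X) (d : ℝ≥0∞) (c : ℕ → ℝ≥0∞),
      (∀ i, MeasurableSet (A i)) → (∀ j i, MeasurableSet (B j i)) →
      (∀ x ∈ univ.pi A, d ≤ ∑' j, c j * ∏ i, (B j i).indicator 1 (x i)) →
      d * ∏ i, μ (A i) ≤ ∑' j, c j * ∏ i, μ (B j i) := by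
  intro k
  induction k with
  | zero =>
    intro A B d c _ _ h
    simpa using h Fin.elim0 (by simp)
  | succ k ih =>
    intro A B d c hA hB h
    have key := ih (fun i => A i.succ) (fun j i => B j i.succ) (d * μ (A 0))
      (fun j => c j * μ (B j 0)) (fun i => hA _) (fun j i => hB _ _) (by
        intro x hx
        have hcover : ∀ y ∈ A 0,
            d ≤ ∑' j, (c j * ∏ i : Fin k, (B j i.succ).indicator 1 (x i)) *
              (B j 0).indicator 1 y := by
          intro y hy
          refine (h (Fin.cons y x) ?_).trans_eq (tsum_congr fun j => ?_)
          · intro i _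
            induction i using Fin.cases with
            | zero => simpa using hy
            | succ i => simpa using hx i (mem_univ _)
          · rw [Fin.prod_univ_succ]
            simp only [Fin.cons_zero, Fin.cons_succ]
            ring
        calc d * μ (A 0) = ∫⁻ _ in A 0, d ∂μ := by simp
          _ ≤ ∫⁻ y in A 0, ∑' j, (c j * ∏ i : Fin k, (B j i.succ).indicator 1 (x i)) *
              (B j 0).indicator 1 y ∂μ := setLIntegral_mono' (hA 0) hcover
          _ ≤ ∫⁻ y, ∑' j, (c j * ∏ i : Fin k, (B j i.succ).indicator 1 (x i)) *
              (B j 0).indicator 1 y ∂μ := setLIntegral_le_lintegral _ _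
          _ = ∑' j, c j * μ (B j 0) * ∏ i : Fin k, (B j i.succ).indicator 1 (x i) := by
            rw [lintegral_tsum fun j =>
              ((measurable_one.indicator (hB j 0)).const_mul _).aemeasurable]
            refine tsum_congr fun j => ?_
            rw [lintegral_const_mul _ (measurable_one.indicator (hB j 0)),
              lintegral_indicator_one (hB j 0)]
            ring)
    simpa [Fin.prod_univ_succ, mul_assoc] using key

/-- The product of measures of the sides bounds the product measure of a measurable box from below,
without any σ-finiteness assumption. -/
theorem prod_measure_le_measure_pi {X : Type*} [MeasurableSpace X] (μ : Measure X) {k : ℕ}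
    (A : Fin (k + 1) → Set X) (hA : ∀ i, MeasurableSet (A i)) :
    ∏ i, μ (A i) ≤ Measure.pi (fun _ : Fin (k + 1) => μ) (univ.pi A) := by
  rw [Measure.pi]
  refine le_trans ?_ (le_toMeasure_apply _ _ _)
  rw [OuterMeasure.pi, OuterMeasure.boundedBy_apply]
  refine le_iInf₂ fun t ht => ?_
  have key := mul_prod_measure_le_tsum_of_cover μ (k + 1) A
    (fun j i => toMeasurable μ (Function.eval i '' t j)) 1 1 hA
    (fun _ _ => measurableSet_toMeasurable _ _) (by
      intro x hx
      obtain ⟨j, hj⟩ := mem_iUnion.1 (ht hx)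
      refine le_trans ?_ (ENNReal.le_tsum j)
      have hmem : ∀ i, x i ∈ toMeasurable μ (Function.eval i '' t j) := fun i =>
        subset_toMeasurable _ _ ⟨x, hj, rfl⟩
      simp [hmem])
  rw [one_mul] at key
  refine key.trans (ENNReal.tsum_le_tsum fun j => ?_)
  rcases (t j).eq_empty_or_nonempty with hj | hj
  · simp [hj]
  · simp [hj, piPremeasure]

/-- A point of the affine span of all vertices but one is an affine combination of the vertices
with vanishing weight at the omitted one. -/
theorem exists_weights_of_mem_affineSpan_image_compl {V ι : Type*} [AddCommGroup V] [Module ℝ V]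
    [Fintype ι] (y : ι → V) (i : ι) {q : V} (hq : q ∈ affineSpan ℝ (y '' {i}ᶜ)) :
    ∃ w : ι → ℝ, w i = 0 ∧ ∑ j, w j = 1 ∧ ∑ j, w j • y j = q := by
  classical
  refine affineSpan_induction hq (fun q hq => ?_) fun c u v z hu hv hz => ?_
  · obtain ⟨j, hj, rfl⟩ := hq
    refine ⟨Pi.single j 1, ?_, by simp, by simp [Pi.single_apply]⟩
    exact Pi.single_eq_of_ne (Ne.symm hj) _
  · obtain ⟨a, ha, ha1, rfl⟩ := hu
    obtain ⟨b, hb, hb1, rfl⟩ := hv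
    obtain ⟨e, he, he1, rfl⟩ := hz
    refine ⟨fun j => c * (a j - b j) + e j, by simp [ha, hb, he], ?_, ?_⟩
    · rw [Finset.sum_add_distrib, ← Finset.mul_sum, Finset.sum_sub_distrib, ha1, hb1, he1]
      simp
    · simp only [add_smul, sub_smul, mul_smul, Finset.sum_add_distrib, ← Finset.smul_sum,
        Finset.sum_sub_distrib, vsub_eq_sub, vadd_eq_add]

/-- The heights of simplices near a nondegenerate simplex are uniformly bounded from below. -/
theorem exists_isHSimplex_of_dist_lt {N m : ℕ} (hm : 1 ≤ m)
    (x : Fin (m + 1) → EuclideanSpace ℝ (Fin N)) (hx : AffineIndependent ℝ x) :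
    ∃ σ > 0, ∃ ε > 0, ∀ y : Fin (m + 1) → EuclideanSpace ℝ (Fin N),
      (∀ j, dist (y j) (x j) < ε) → IsHSimplex N σ y := by
  let L : (Fin (m + 1) → ℝ) →ₗ[ℝ] EuclideanSpace ℝ (Fin N) × ℝ :=
    (Fintype.linearCombination ℝ x).prod (Fintype.linearCombination ℝ fun _ => (1 : ℝ))
  have hL : LinearMap.ker L = ⊥ := by
    rw [LinearMap.ker_eq_bot']
    intro a ha
    have hpt : ∑ j, a j • x j = 0 := by
      simpa [L, Fintype.linearCombination_apply] using congrArg Prod.fst ha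
    have hsum : ∑ j, a j = 0 := by
      simpa [L, Fintype.linearCombination_apply] using congrArg Prod.snd ha
    funext i
    exact affineIndependent_iff.1 hx Finset.univ a hsum hpt i (Finset.mem_univ i)
  obtain ⟨κ, hκ, hanti⟩ := L.exists_antilipschitzWith hL
  have hbound : ∀ a : Fin (m + 1) → ℝ, ∑ j, a j = 0 → ‖a‖ ≤ κ * ‖∑ j, a j • x j‖ := by
    intro a ha
    have h := hanti.le_mul_dist a 0
    simpa [L, Fintype.linearCombination_apply, ha, Prod.norm_def] using h
  have hκ' : (0 : ℝ) < κ := hκ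
  refine ⟨1 / (2 * κ), by positivity, 1 / (2 * κ * (m + 1)), by positivity, fun y hy i => ?_⟩
  have : Nontrivial (Fin (m + 1)) := Fin.nontrivial_iff_two_le.2 (by omega)
  have hne : (affineSpan ℝ (y '' {i}ᶜ) : Set (EuclideanSpace ℝ (Fin N))).Nonempty := by
    obtain ⟨j, hj⟩ := exists_ne i
    exact ⟨y j, subset_affineSpan ℝ _ ⟨j, hj, rfl⟩⟩
  refine (le_infDist hne).2 fun q hq => ?_
  obtain ⟨w, hwi, hw1, rfl⟩ := exists_weights_of_mem_affineSpan_image_compl y i hq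
  set a : Fin (m + 1) → ℝ := Pi.single i 1 - w with ha_def
  have ha0 : ∑ j, a j = 0 := by simp [ha_def, hw1]
  have hay : y i - ∑ j, w j • y j = ∑ j, a j • y j := by
    simp [ha_def, sub_smul, Finset.sum_sub_distrib, Pi.single_apply]
  have ha1 : 1 ≤ ‖a‖ := by
    have := norm_le_pi_norm a i
    simpa [ha_def, hwi] using this
  have hdiff : ‖∑ j, a j • x j‖ ≤ ‖∑ j, a j • y j‖ + ‖a‖ / (2 * κ) := by
    have h1 : ∑ j, a j • x j = ∑ j, a j • y j - ∑ j, a j • (y j - x j) := by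
      simp [smul_sub, Finset.sum_sub_distrib]
    have h2 : ‖∑ j, a j • (y j - x j)‖ ≤ ‖a‖ / (2 * κ) := by
      calc ‖∑ j, a j • (y j - x j)‖ ≤ ∑ j : Fin (m + 1), ‖a‖ * (1 / (2 * κ * (m + 1))) := by
            refine norm_sum_le_of_le _ fun j _ => ?_
            rw [norm_smul]
            have := (hy j).le
            rw [dist_eq_norm] at this
            gcongr
            exact norm_le_pi_norm a j
        _ = ‖a‖ / (2 * κ) := by
            simp only [Finset.sum_const, Finset.card_univ, Fintype.card_fin, nsmul_eq_mul]
            push_cast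
            field_simp
    rw [h1]
    exact (norm_sub_le _ _).trans (by gcongr)
  rw [dist_eq_norm, hay]
  have h3 := hbound a ha0
  have h4 : ‖a‖ ≤ κ * ‖∑ j, a j • y j‖ + ‖a‖ / 2 := by
    calc ‖a‖ ≤ κ * ‖∑ j, a j • x j‖ := h3
      _ ≤ κ * (‖∑ j, a j • y j‖ + ‖a‖ / (2 * κ)) := by gcongr
      _ = _ := by field_simp
  rw [div_le_iff₀ (by positivity)]
  linarith

/-- Bounded parts of `k`-dimensional affine subspaces with `k ≤ n` have finite `n`-dimensional
Hausdorff measure. -/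
theorem hausdorffMeasure_coset_inter_closedBall_lt_top {V : Type*} [NormedAddCommGroup V]
    [NormedSpace ℝ V] [FiniteDimensional ℝ V] [MeasurableSpace V] [BorelSpace V] {n : ℕ}
    (D : Submodule ℝ V) (hD : Module.finrank ℝ D ≤ n) (q c : V) (r : ℝ) :
    μH[(n : ℝ)] ({z | z - q ∈ D} ∩ closedBall c r) < ⊤ := by
  have hiso : Isometry fun v : D => (v : V) + q :=
    (IsometryEquiv.addRight q).isometry.comp isometry_subtype_coe
  have himage : {z | z - q ∈ D} ∩ closedBall c r ⊆
      (fun v : D => (v : V) + q) '' closedBall 0 (r + dist c q) := by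
    rintro z ⟨hz, hzc⟩
    refine ⟨⟨z - q, hz⟩, ?_, by simp⟩
    rw [mem_closedBall, dist_zero_right, Submodule.coe_norm, ← dist_eq_norm]
    exact (dist_triangle z c q).trans (by gcongr; exact hzc)
  refine (measure_mono himage).trans_lt ?_
  rw [hiso.hausdorffMeasure_image (Or.inl (Nat.cast_nonneg n))]
  refine (Measure.hausdorffMeasure_mono (Nat.cast_le.2 hD) _).trans_lt ?_
  exact (isCompact_closedBall _ _).measure_lt_top

/-- If `s` is contained in no translate through `x₀` of a subspace of dimension at most `n`, then
`x₀` can be completed to an affinely independent family by points of `s`. -/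
theorem exists_affineIndependent_cons {V : Type*} [AddCommGroup V] [Module ℝ V]
    {n : ℕ} (s : Set V) (x₀ : V)
    (hs : ∀ D : Submodule ℝ V, Module.finrank ℝ D ≤ n → ∃ z ∈ s, z - x₀ ∉ D) :
    ∃ y : Fin (n + 1) → V, (∀ i, y i ∈ s) ∧
      AffineIndependent ℝ (Fin.cons x₀ y : Fin (n + 2) → V) := by
  have hlin : ∀ k ≤ n + 1, ∃ y : Fin k → V, (∀ i, y i ∈ s) ∧
      LinearIndependent ℝ fun i => y i - x₀ := by
    intro k
    induction k with
    | zero => exact fun _ => ⟨Fin.elim0, fun i => i.elim0, linearIndependent_empty_type⟩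
    | succ k ih =>
      intro hk
      obtain ⟨y, hy, hli⟩ := ih (by omega)
      obtain ⟨z, hz, hzD⟩ := hs (Submodule.span ℝ (range fun i => y i - x₀))
        ((finrank_range_le_card _).trans (by simpa using hk))
      refine ⟨Fin.snoc y z, fun i => ?_, ?_⟩
      · induction i using Fin.lastCases with
        | last => simpa using hz
        | cast i => simpa using hy i
      · have hsnoc := linearIndependent_finSnoc.2 ⟨hli, hzD⟩
        have heq : (fun i => (Fin.snoc y z : Fin (k + 1) → V) i - x₀) =
            Fin.snoc (fun i => y i - x₀) (z - x₀) := by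
          funext i
          induction i using Fin.lastCases with
          | last => simp
          | cast i => simp
        rwa [heq]
  obtain ⟨y, hy, hli⟩ := hlin (n + 1) le_rfl
  refine ⟨y, hy, ?_⟩
  rw [affineIndependent_iff_linearIndependent_vsub ℝ _ 0,
    ← linearIndependent_equiv (finSuccAboveEquiv (0 : Fin (n + 2)))]
  have heq : (fun i : {j : Fin (n + 2) // j ≠ 0} =>
      (Fin.cons x₀ y : Fin (n + 2) → V) i -ᵥ (Fin.cons x₀ y : Fin (n + 2) → V) 0) ∘
        finSuccAboveEquiv 0 = fun i => y i - x₀ := by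
    funext i
    simp [finSuccAboveEquiv_apply]
  rwa [heq]

/-- On `(n+1)`-simplices with vertices in a fixed ball and heights bounded from below,
a proper integrand is bounded from below by a positive constant. -/
theorem ProperIntegrand.exists_pos_le {N n : ℕ} (hn : 1 ≤ n) {p : ℝ} (hp : 1 < p)
    {K : (Fin (n + 2) → EuclideanSpace ℝ (Fin N)) → ℝ} (hK : ProperIntegrand N n p K)
    {σ : ℝ} (hσ : 0 < σ) (b : EuclideanSpace ℝ (Fin N)) (r : ℝ) :
    ∃ δ > 0, ∀ y : Fin (n + 2) → EuclideanSpace ℝ (Fin N), IsHSimplex N σ y →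
      (∀ j, y j ∈ closedBall b r) → δ ≤ K y ^ p := by
  obtain ⟨-, -, ⟨c, hc, l, -, hlow⟩, -, -⟩ := hK
  set C : ℝ := max 1 (max (1 / σ) r)
  have hC1 : 1 ≤ C := le_max_left _ _
  have hC0 : 0 < C := one_pos.trans_le hC1
  have hCσ : 1 / C ≤ σ := by
    rw [one_div_le hC0 hσ]
    exact (le_max_left _ _).trans (le_max_right _ _)
  have hCr : r ≤ C * 1 := by
    rw [mul_one]
    exact (le_max_right _ _).trans (le_max_right _ _)
  have hc0 : 0 < c * C ^ l := mul_pos (one_pos.trans_le hc) (Real.rpow_pos_of_pos hC0 l)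
  refine ⟨σ ^ p / (c * C ^ l), div_pos (Real.rpow_pos_of_pos hσ p) hc0, fun y hy hyb => ?_⟩
  have hball : ∀ j, y j ∈ closedBall b (C * 1) := fun j => closedBall_subset_closedBall hCr (hyb j)
  have : Nontrivial (Fin (n + 1)) := Fin.nontrivial_iff_two_le.2 (by omega)
  have h := hlow 1 one_pos C hC1 b (Fin.init y) ?_ ?_ (y (Fin.last _)) (hball _)
  · rw [Fin.snoc_init_self, div_one, one_pow, mul_one] at h
    rw [div_le_iff₀' hc0]
    refine le_trans (Real.rpow_le_rpow hσ.le ?_ (by linarith)) h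
    refine (hy (Fin.last _)).trans (infDist_le_infDist_of_subset ?_ ?_)
    · refine affineSpan_mono ℝ ?_
      rintro _ ⟨j, rfl⟩
      exact ⟨j.castSucc, (Fin.castSucc_lt_last j).ne, rfl⟩
    · exact ⟨_, subset_affineSpan ℝ _ ⟨0, rfl⟩⟩
  · intro i
    refine hCσ.trans ((hy i.castSucc).trans (infDist_le_infDist_of_subset ?_ ?_))
    · refine affineSpan_mono ℝ ?_
      rintro _ ⟨j, hj, rfl⟩
      exact ⟨j.castSucc, fun h => hj (Fin.castSucc_injective _ h), rfl⟩
    · obtain ⟨j, hj⟩ := exists_ne i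
      exact ⟨_, subset_affineSpan ℝ _ ⟨j, hj, rfl⟩⟩
  · refine convexHull_min ?_ (convex_closedBall _ _)
    rintro _ ⟨j, rfl⟩
    exact hball _

/-- **Lemma.** Let `1 ≤ n < N`, `p > 1` and let `K^p` be a proper integrand.  If `E ⊆ ℝ^N`
is a Borel set with `M_{K^p}(E) < ∞`, then `H^n(E ∩ B) < ∞` for every closed ball `B`. -/
theorem hausdorff_locally_finite_of_menger_finite {N n : ℕ} (hn : 1 ≤ n) (hnN : n < N)
    (p : ℝ) (hp : 1 < p)
    (K : (Fin (n + 2) → EuclideanSpace ℝ (Fin N)) → ℝ)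
    (hK : ProperIntegrand N n p K)
    (E : Set (EuclideanSpace ℝ (Fin N))) (hE : MeasurableSet E)
    (hfin : MengerEnergy N n p K (μH[(n : ℝ)].restrict E) < ⊤) :
    ∀ (c : EuclideanSpace ℝ (Fin N)) (r : ℝ),
      μH[(n : ℝ)] (E ∩ Metric.closedBall c r) < ⊤ := by
  intro b r
  by_contra hinf
  set A := E ∩ closedBall b r
  have hA : MeasurableSet A := hE.inter isClosed_closedBall.measurableSet
  set ν : Measure (EuclideanSpace ℝ (Fin N)) := μH[(n : ℝ)].restrict A with hν
  -- a point at which the measure is nowhere locally finite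
  obtain ⟨x₀, hx₀⟩ : ∃ x₀, ∀ U ∈ nhds x₀, ν U = ⊤ := by
    by_contra! hcon
    refine hinf ?_
    have h := (isCompact_closedBall b r).measure_lt_top_of_nhdsWithin (μ := ν) fun x _ => by
      obtain ⟨U, hU, hUν⟩ := hcon x
      exact ⟨U, mem_nhdsWithin_of_mem_nhds hU, hUν.lt_top⟩
    rwa [hν, Measure.restrict_apply isClosed_closedBall.measurableSet,
      inter_eq_self_of_subset_right inter_subset_right] at h
  -- the support of the measure is not contained in an `n`-plane
  obtain ⟨y, hy, hind⟩ := exists_affineIndependent_cons (n := n) ν.support x₀ (by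
    intro D hD
    by_contra! hcon
    refine hinf ?_
    have hsub : A ⊆ ({z | z - x₀ ∈ D} ∩ closedBall b r) ∪ (A ∩ ν.supportᶜ) := by
      intro z hz
      by_cases hzs : z ∈ ν.support
      · exact Or.inl ⟨hcon z hzs, hz.2⟩
      · exact Or.inr ⟨hz, hzs⟩
    have hnull : μH[(n : ℝ)] (A ∩ ν.supportᶜ) = 0 := by
      have h := Measure.measure_compl_support (μ := ν)
      rwa [hν, Measure.restrict_apply Measure.isOpen_compl_support.measurableSet, inter_comm] at h
    refine (measure_mono hsub).trans_lt ((measure_union_le _ _).trans_lt ?_)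
    rw [hnull, add_zero]
    exact hausdorffMeasure_coset_inter_closedBall_lt_top D hD x₀ b r)
  obtain ⟨σ, hσ, ε, hε, hsimplex⟩ := exists_isHSimplex_of_dist_lt (by omega) _ hind
  obtain ⟨δ, hδ, hlow⟩ := hK.exists_pos_le hn hp hσ b r
  set x : Fin (n + 2) → EuclideanSpace ℝ (Fin N) := Fin.cons x₀ y
  set S : Fin (n + 2) → Set (EuclideanSpace ℝ (Fin N)) := fun j => ball (x j) ε ∩ A
  have hS : ∀ j, MeasurableSet (S j) := fun j => measurableSet_ball.inter hA
  have hSν : ∀ j, μH[(n : ℝ)].restrict E (S j) = ν (ball (x j) ε) := by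
    intro j
    rw [hν, Measure.restrict_apply measurableSet_ball, Measure.restrict_apply (hS j),
      inter_eq_self_of_subset_left]
    exact fun z hz => hz.2.1
  have hprod : ∏ j, μH[(n : ℝ)].restrict E (S j) = ⊤ := by
    rw [Fin.prod_univ_succ, hSν 0, show ν (ball (x 0) ε) = ⊤ from hx₀ _ (ball_mem_nhds _ hε),
      ENNReal.top_mul]
    refine Finset.prod_ne_zero_iff.2 fun j _ => ?_
    rw [hSν]
    exact ((Measure.mem_support_iff_forall _).1 (hy j) _ (ball_mem_nhds _ hε)).ne'
  have hpi : Measure.pi (fun _ : Fin (n + 2) => μH[(n : ℝ)].restrict E) (univ.pi S) = ⊤ :=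
    top_le_iff.1 (hprod ▸ prod_measure_le_measure_pi _ S hS)
  refine hfin.ne (top_le_iff.1 ?_)
  calc ⊤ = ENNReal.ofReal δ *
        Measure.pi (fun _ : Fin (n + 2) => μH[(n : ℝ)].restrict E) (univ.pi S) := by
        rw [hpi, ENNReal.mul_top (ENNReal.ofReal_pos.2 hδ).ne']
    _ = ∫⁻ _ in univ.pi S, ENNReal.ofReal δ
        ∂(Measure.pi fun _ : Fin (n + 2) => μH[(n : ℝ)].restrict E) := by
        rw [setLIntegral_const]
    _ ≤ ∫⁻ z in univ.pi S, ENNReal.ofReal (K z ^ p)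
        ∂(Measure.pi fun _ : Fin (n + 2) => μH[(n : ℝ)].restrict E) := by
        refine setLIntegral_mono' (MeasurableSet.univ_pi hS) fun z hz => ?_
        exact ENNReal.ofReal_le_ofReal (hlow z
          (hsimplex z fun j => (hz j (mem_univ j)).1) fun j => (hz j (mem_univ j)).2.2)
    _ ≤ MengerEnergy N n p K (μH[(n : ℝ)].restrict E) := setLIntegral_le_lintegral _ _

end
end

section
/- Let 1 ≤ n < N be integers, p > 1, and let K : (ℝ^N)^{n+2} → [0,∞) be such that K^p is a proper integrand. Then there exists a function K̃ : (ℝ^N)^{n+2} → [0,∞) such that K̃^p is a proper integrand, K̃ is symmetric (invariant under every permutation of its n+2 arguments), and M_{K̃^p}(E) = M_{K^p}(E) for every Borel set E ⊂ ℝ^N. -/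
open MeasureTheory Metric Set
open scoped NNReal ENNReal

noncomputable section

/-- `K` is symmetric: invariant under every permutation of its `n+2` arguments. -/
def SymmetricKernel (N n : ℕ) (K : (Fin (n + 2) → EuclideanSpace ℝ (Fin N)) → ℝ) : Prop :=
  ∀ (σ : Equiv.Perm (Fin (n + 2))) (z : Fin (n + 2) → EuclideanSpace ℝ (Fin N)), K (z ∘ σ) = K z

/-- Permuting the coordinates does not increase the product of a measure with itself; no
`σ`-finiteness is assumed. -/
theorem map_comp_perm_pi_le {ι α : Type*} [Fintype ι] [MeasurableSpace α] (μ : Measure α)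
    (σ : Equiv.Perm ι) :
    (Measure.pi fun _ : ι => μ).map (fun z => z ∘ σ) ≤ Measure.pi fun _ : ι => μ := by
  have hσ : Measurable fun z : ι → α => z ∘ σ :=
    measurable_pi_iff.2 fun i => measurable_pi_apply (σ i)
  have hle : ((Measure.pi fun _ : ι => μ).map (fun z => z ∘ σ)).toOuterMeasure ≤
      OuterMeasure.pi fun _ : ι => μ.toOuterMeasure := by
    rw [OuterMeasure.le_pi]
    intro s _
    have hmeas : ∀ τ : ι → ι, MeasurableSet (univ.pi fun i => toMeasurable μ (s (τ i))) :=
      fun _ => MeasurableSet.univ_pi fun i => measurableSet_toMeasurable _ _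
    have hpre : (fun z : ι → α => z ∘ σ) ⁻¹' (univ.pi fun i => toMeasurable μ (s i)) =
        univ.pi fun i => toMeasurable μ (s (σ.symm i)) := by
      ext z
      simp only [mem_preimage, mem_univ_pi, Function.comp_apply]
      exact ⟨fun h i => by simpa using h (σ.symm i), fun h i => by simpa using h (σ i)⟩
    calc (Measure.pi fun _ : ι => μ).map (fun z => z ∘ σ) (univ.pi s)
        ≤ (Measure.pi fun _ : ι => μ).map (fun z => z ∘ σ)
            (univ.pi fun i => toMeasurable μ (s i)) :=
          measure_mono (pi_mono fun i _ => subset_toMeasurable _ _)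
      _ = Measure.pi (fun _ : ι => μ) (univ.pi fun i => toMeasurable μ (s (σ.symm i))) := by
          rw [Measure.map_apply hσ (hmeas fun i => i), hpre]
      _ ≤ ∏ i, μ (toMeasurable μ (s (σ.symm i))) := by
          rw [Measure.pi, toMeasure_apply _ _ (hmeas σ.symm)]
          exact OuterMeasure.pi_pi_le _ _
      _ = ∏ i, μ (s i) := by
          simp only [measure_toMeasurable]
          exact Equiv.prod_comp σ.symm fun i => μ (s i)
  refine Measure.le_iff.2 fun A hA => (hle A).trans_eq ?_
  rw [Measure.pi, toMeasure_apply _ _ hA]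

/-- The product of a measure with itself is invariant under permutations of the coordinates; no
`σ`-finiteness is assumed. -/
theorem measurePreserving_comp_perm_pi {ι α : Type*} [Fintype ι] [MeasurableSpace α]
    (μ : Measure α) (σ : Equiv.Perm ι) :
    MeasurePreserving (fun z : ι → α => z ∘ σ) (Measure.pi fun _ : ι => μ)
      (Measure.pi fun _ : ι => μ) := by
  have hmeas : ∀ τ : Equiv.Perm ι, Measurable fun z : ι → α => z ∘ τ :=
    fun τ => measurable_pi_iff.2 fun i => measurable_pi_apply (τ i)
  refine ⟨hmeas σ, (map_comp_perm_pi_le μ σ).antisymm ?_⟩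
  have h := Measure.map_mono (map_comp_perm_pi_le μ σ.symm) (hmeas σ)
  rw [Measure.map_map (hmeas σ) (hmeas σ.symm)] at h
  have hid : (fun z : ι → α => z ∘ σ) ∘ (fun z => z ∘ σ.symm) = id := by
    ext z i
    simp
  rwa [hid, Measure.map_id] at h

/-- The average of `K ^ p` over all permutations of the arguments, raised to the power `1 / p`. -/
def symmetrization {ι α : Type*} [Fintype ι] [DecidableEq ι] (p : ℝ) (K : (ι → α) → ℝ)
    (z : ι → α) : ℝ :=
  ((Fintype.card (Equiv.Perm ι) : ℝ)⁻¹ * ∑ σ : Equiv.Perm ι, K (z ∘ σ) ^ p) ^ p⁻¹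

section symmetrization

variable {ι α : Type*} [Fintype ι] [DecidableEq ι] {p : ℝ} {K : (ι → α) → ℝ}

theorem symmetrization_base_nonneg (hK : ∀ z, 0 ≤ K z) (z : ι → α) :
    0 ≤ (Fintype.card (Equiv.Perm ι) : ℝ)⁻¹ * ∑ σ : Equiv.Perm ι, K (z ∘ σ) ^ p :=
  mul_nonneg (by positivity) (Finset.sum_nonneg fun _ _ => Real.rpow_nonneg (hK _) _)

theorem symmetrization_nonneg (hK : ∀ z, 0 ≤ K z) (z : ι → α) : 0 ≤ symmetrization p K z :=
  Real.rpow_nonneg (symmetrization_base_nonneg hK z) _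

theorem symmetrization_rpow (hp : p ≠ 0) (hK : ∀ z, 0 ≤ K z) (z : ι → α) :
    symmetrization p K z ^ p =
      (Fintype.card (Equiv.Perm ι) : ℝ)⁻¹ * ∑ σ : Equiv.Perm ι, K (z ∘ σ) ^ p :=
  Real.rpow_inv_rpow (symmetrization_base_nonneg hK z) hp

theorem rpow_le_card_mul_symmetrization_rpow (hp : p ≠ 0) (hK : ∀ z, 0 ≤ K z) (z : ι → α) :
    K z ^ p ≤ Fintype.card (Equiv.Perm ι) * symmetrization p K z ^ p := by
  rw [symmetrization_rpow hp hK, mul_inv_cancel_left₀ (Nat.cast_ne_zero.2 Fintype.card_ne_zero)]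
  exact Finset.single_le_sum (f := fun σ : Equiv.Perm ι => K (z ∘ σ) ^ p)
    (fun _ _ => Real.rpow_nonneg (hK _) _) (Finset.mem_univ 1)

theorem symmetrization_comp_perm (τ : Equiv.Perm ι) (z : ι → α) :
    symmetrization p K (z ∘ τ) = symmetrization p K z := by
  unfold symmetrization
  congr 2
  exact Equiv.sum_comp (Equiv.mulLeft τ) fun σ : Equiv.Perm ι => K (z ∘ σ) ^ p

theorem measurable_symmetrization [MeasurableSpace α] (hK : Measurable K) :
    Measurable (symmetrization p K) := by
  refine Measurable.pow_const (Measurable.const_mul ?_ _) _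
  refine Finset.measurable_sum _ fun σ _ => Measurable.pow_const (hK.comp ?_) _
  exact measurable_pi_iff.2 fun i => measurable_pi_apply (σ i)

theorem lintegral_symmetrization_rpow [MeasurableSpace α] (hp : p ≠ 0) (hK : ∀ z, 0 ≤ K z)
    (hm : Measurable K) (μ : Measure α) :
    ∫⁻ z, ENNReal.ofReal (symmetrization p K z ^ p) ∂(Measure.pi fun _ : ι => μ) =
      ∫⁻ z, ENNReal.ofReal (K z ^ p) ∂(Measure.pi fun _ : ι => μ) := by
  have hf : Measurable fun z => ENNReal.ofReal (K z ^ p) := (hm.pow_const p).ennreal_ofReal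
  have hpt : ∀ z, ENNReal.ofReal (symmetrization p K z ^ p) =
      ENNReal.ofReal (Fintype.card (Equiv.Perm ι) : ℝ)⁻¹ *
        ∑ σ : Equiv.Perm ι, ENNReal.ofReal (K (z ∘ σ) ^ p) := fun z => by
    rw [symmetrization_rpow hp hK, ENNReal.ofReal_mul (by positivity),
      ENNReal.ofReal_sum_of_nonneg fun _ _ => Real.rpow_nonneg (hK _) _]
  have hmeas : ∀ σ : Equiv.Perm ι, Measurable fun z : ι → α => ENNReal.ofReal (K (z ∘ σ) ^ p) :=
    fun σ => hf.comp (measurePreserving_comp_perm_pi μ σ).measurable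
  have hint : ∀ σ : Equiv.Perm ι,
      ∫⁻ z, ENNReal.ofReal (K (z ∘ σ) ^ p) ∂(Measure.pi fun _ : ι => μ) =
        ∫⁻ z, ENNReal.ofReal (K z ^ p) ∂(Measure.pi fun _ : ι => μ) :=
    fun σ => (measurePreserving_comp_perm_pi μ σ).lintegral_comp hf
  have hcard : (0 : ℝ) < Fintype.card (Equiv.Perm ι) := Nat.cast_pos.2 Fintype.card_pos
  simp_rw [hpt]
  rw [lintegral_const_mul _ (Finset.measurable_sum _ fun σ _ => hmeas σ),
    lintegral_finsetSum _ fun σ _ => hmeas σ]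
  simp_rw [hint]
  rw [Finset.sum_const, Finset.card_univ, nsmul_eq_mul, ← mul_assoc,
    ENNReal.ofReal_inv_of_pos hcard, ENNReal.ofReal_natCast,
    ENNReal.inv_mul_cancel (Nat.cast_ne_zero.2 Fintype.card_ne_zero) (ENNReal.natCast_ne_top _),
    one_mul]

end symmetrization

theorem ProperIntegrand.symmetrization {N n : ℕ} {p : ℝ} (hp : p ≠ 0)
    {K : (Fin (n + 2) → EuclideanSpace ℝ (Fin N)) → ℝ} (hK : ProperIntegrand N n p K) :
    ProperIntegrand N n p (symmetrization p K) := by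
  obtain ⟨hnn, hm, ⟨c, hc, l, hl, hlow⟩, hscale, htrans⟩ := hK
  have hcard : (1 : ℝ) ≤ Fintype.card (Equiv.Perm (Fin (n + 2))) :=
    Nat.one_le_cast.2 Fintype.card_pos
  refine ⟨symmetrization_nonneg hnn, measurable_symmetrization hm,
    ⟨c * Fintype.card (Equiv.Perm (Fin (n + 2))), one_le_mul_of_one_le_of_one_le hc hcard, l, hl,
      ?_⟩, ?_, ?_⟩
  · intro t ht C hC x y hy hsub w hw
    refine (hlow t ht C hC x y hy hsub w hw).trans ?_
    have hpos : 0 ≤ c * C ^ l * t ^ (n * (n + 1)) := by positivity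
    refine (mul_le_mul_of_nonneg_left
      (rpow_le_card_mul_symmetrization_rpow hp hnn _) hpos).trans_eq ?_
    ring
  · intro t ht z
    rw [symmetrization_rpow hp hnn, symmetrization_rpow hp hnn, mul_left_comm, Finset.mul_sum]
    congr 1
    exact Finset.sum_congr rfl fun σ _ => hscale t ht (z ∘ σ)
  · intro b z
    have h : ∀ σ : Equiv.Perm (Fin (n + 2)), K ((fun i => z i + b) ∘ σ) = K (z ∘ σ) :=
      fun σ => htrans b (z ∘ σ)
    simp only [_root_.symmetrization, h]

/-- **Lemma (symmetrization).** Let `1 ≤ n < N`, `p > 1` and let `K^p` be a proper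
integrand.  There exists a symmetric `K̃` such that `K̃^p` is a proper integrand and
`M_{K̃^p}(E) = M_{K^p}(E)` for every Borel set `E ⊆ ℝ^N`. -/
theorem exists_symmetric_proper_integrand {N n : ℕ} (hn : 1 ≤ n) (hnN : n < N)
    (p : ℝ) (hp : 1 < p)
    (K : (Fin (n + 2) → EuclideanSpace ℝ (Fin N)) → ℝ)
    (hK : ProperIntegrand N n p K) :
    ∃ Kt : (Fin (n + 2) → EuclideanSpace ℝ (Fin N)) → ℝ,
      ProperIntegrand N n p Kt ∧ SymmetricKernel N n Kt ∧
      ∀ E : Set (EuclideanSpace ℝ (Fin N)), MeasurableSet E →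
        MengerEnergy N n p Kt (μH[(n : ℝ)].restrict E)
          = MengerEnergy N n p K (μH[(n : ℝ)].restrict E) := by
  have hp0 : p ≠ 0 := by positivity
  exact ⟨symmetrization p K, hK.symmetrization hp0, symmetrization_comp_perm,
    fun _ _ => lintegral_symmetrization_rpow hp0 hK.1 hK.2.1 _⟩

end
end

section
/- Let 0 < h < H, let 1 ≤ m ≤ N+1, and let y_0, x_0, x_1, …, x_m ∈ ℝ^N. If Δ(x_0,…,x_m) is an (m,H)-simplex and |y_0 − x_0| ≤ h, then Δ(y_0, x_1, …, x_m) is an (m, H−h)-simplex. -/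
open MeasureTheory Metric Set
open scoped NNReal ENNReal

noncomputable section

/-- The affine span of the points `x j`, `j ≠ i`, consists of the combinations of the family `x`
with total weight `1` in which `x i` has weight `0`. -/
lemma mem_affineSpan_image_compl_singleton_iff {ι E : Type*} [Fintype ι] [AddCommGroup E]
    [Module ℝ E] (x : ι → E) (i : ι) (p : E) :
    p ∈ affineSpan ℝ (x '' ({i}ᶜ : Set ι)) ↔
      ∃ w : ι → ℝ, w i = 0 ∧ ∑ j, w j = 1 ∧ p = ∑ j, w j • x j := by
  classical
  constructor
  · intro hp
    refine affineSpan_induction hp ?_ ?_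
    · rintro _ ⟨j, hj, rfl⟩
      refine ⟨Pi.single j 1, Pi.single_eq_of_ne (Ne.symm hj) _, by simp, ?_⟩
      simp [Pi.single_apply, ite_smul]
    · rintro c _ _ _ ⟨u, hu0, hu1, rfl⟩ ⟨v, hv0, hv1, rfl⟩ ⟨w, hw0, hw1, rfl⟩
      refine ⟨fun j => c * (u j - v j) + w j, by simp [hu0, hv0, hw0], ?_, ?_⟩
      · rw [Finset.sum_add_distrib, ← Finset.mul_sum, Finset.sum_sub_distrib, hu1, hv1, hw1]
        ring
      · simp only [vsub_eq_sub, vadd_eq_add, add_smul, mul_smul, sub_smul,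
          Finset.sum_add_distrib, ← Finset.smul_sum, Finset.sum_sub_distrib]
  · rintro ⟨w, hw0, hw1, rfl⟩
    rw [← Finset.affineCombination_eq_linear_combination _ _ _ hw1]
    refine affineCombination_mem_affineSpan_image hw1 (fun j _ hj => ?_) x
    rwa [Set.notMem_compl_iff.1 hj]

/-- **Lemma.** Let `0 < h < H`, `1 ≤ m ≤ N+1`.  If `Δ(x₀,…,x_m)` is an `(m,H)`-simplex
and `|y₀ − x₀| ≤ h`, then `Δ(y₀,x₁,…,x_m)` is an `(m,H−h)`-simplex. -/
theorem isHSimplex_update {N m : ℕ} (hm1 : 1 ≤ m) (hmN : m ≤ N + 1)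
    (h H : ℝ) (hh : 0 < h) (hH : h < H)
    (x : Fin (m + 1) → EuclideanSpace ℝ (Fin N)) (y₀ : EuclideanSpace ℝ (Fin N))
    (hx : IsHSimplex N H x) (hy : dist y₀ (x 0) ≤ h) :
    IsHSimplex N (H - h) (Function.update x 0 y₀) := by
  have hy' : ‖y₀ - x 0‖ ≤ h := by rwa [← dist_eq_norm]
  have hbase : H - h ≤ Metric.infDist y₀
      (affineSpan ℝ (x '' ({0}ᶜ : Set (Fin (m + 1)))) : Set (EuclideanSpace ℝ (Fin N))) := by
    have hx0 := hx 0
    have htri := Metric.infDist_le_infDist_add_dist (x := x 0) (y := y₀)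
      (s := (affineSpan ℝ (x '' ({0}ᶜ : Set (Fin (m + 1)))) : Set (EuclideanSpace ℝ (Fin N))))
    rw [dist_comm] at htri
    linarith
  intro i
  rcases eq_or_ne i 0 with rfl | hi
  · rw [Function.update_self, Set.image_congr (g := x)]
    · exact hbase
    · exact fun j hj => Function.update_of_ne hj _ _
  rw [Function.update_of_ne hi]
  refine (Metric.le_infDist ?_).2 fun p hp => ?_
  · exact (affineSpan_nonempty ℝ).2 ⟨_, 0, hi.symm, rfl⟩
  obtain ⟨w, hwi, hw1, rfl⟩ := (mem_affineSpan_image_compl_singleton_iff _ _ _).1 hp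
  set p := ∑ j, w j • Function.update x 0 y₀ j with hpdef
  have hp_eq : p = ∑ j, w j • x j + w 0 • (y₀ - x 0) := by
    rw [hpdef, Fin.sum_univ_succ, Fin.sum_univ_succ]
    simp only [Function.update_self, ne_eq, Fin.succ_ne_zero, not_false_eq_true,
      Function.update_of_ne]
    module
  rw [dist_eq_norm]
  rcases le_total |w 0| 1 with ht | ht
  · -- Compare with the same combination of the original vertices.
    have hfar : H ≤ ‖x i - ∑ j, w j • x j‖ := by
      rw [← dist_eq_norm]
      exact (hx i).trans (Metric.infDist_le_dist_of_mem
        ((mem_affineSpan_image_compl_singleton_iff _ _ _).2 ⟨w, hwi, hw1, rfl⟩))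
    have hshift : ‖w 0 • (y₀ - x 0)‖ ≤ h := by
      rw [norm_smul, Real.norm_eq_abs]
      nlinarith [norm_nonneg (y₀ - x 0), abs_nonneg (w 0)]
    have htri := norm_sub_norm_le (x i - ∑ j, w j • x j) (w 0 • (y₀ - x 0))
    rw [sub_sub, ← hp_eq] at htri
    linarith
  · -- Solve for the moved vertex: it is close to the opposite face if `x i` is close to `p`.
    have ht0 : w 0 ≠ 0 := by
      intro h0
      norm_num [h0] at ht
    have hz : y₀ + (w 0)⁻¹ • (x i - p) ∈ affineSpan ℝ (x '' ({0}ᶜ : Set (Fin (m + 1)))) := by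
      refine (mem_affineSpan_image_compl_singleton_iff _ _ _).2
        ⟨fun j => Pi.single (M := fun _ => ℝ) 0 1 j
          + (w 0)⁻¹ * (Pi.single (M := fun _ => ℝ) i 1 j - w j), ?_, ?_, ?_⟩
      · simp [Pi.single_eq_of_ne hi.symm, ht0]
      · rw [Finset.sum_add_distrib, ← Finset.mul_sum, Finset.sum_sub_distrib, hw1]
        simp
      · simp only [add_smul, mul_smul, sub_smul, Finset.sum_add_distrib, ← Finset.smul_sum,
          Finset.sum_sub_distrib, hp_eq]
        simp only [Pi.single_apply, ite_smul, one_smul, zero_smul, Finset.sum_ite_eq',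
          Finset.mem_univ, if_true]
        match_scalars <;> field_simp <;> ring
    have hfar := hbase.trans (Metric.infDist_le_dist_of_mem hz)
    rw [dist_self_add_right, norm_smul, norm_inv, Real.norm_eq_abs] at hfar
    exact hfar.trans (mul_le_of_le_one_left (norm_nonneg _) (inv_le_one_of_one_le₀ ht))

end
end

section
/- Let 1 ≤ m ≤ N−1 be integers, let B be a closed ball in ℝ^N, and let F ⊂ B be an H^m-measurable set with H^m(F) = ∞. Then there exist a constant σ with 0 < σ ≤ (diam B)/2 and an (m+1, (m+3)σ)-simplex T = Δ(x_0,…,x_{m+1}) with vertices x_0,…,x_{m+1} ∈ B such that H^m(B(x_0,σ) ∩ F) = ∞ and H^m(B(x_i,σ) ∩ F) > 0 for every i ∈ {1,…,m+1}. -/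
open MeasureTheory Metric Set
open scoped NNReal ENNReal

noncomputable section

/-- A bounded piece of a translate of a subspace of dimension at most `m` has finite
`m`-dimensional Hausdorff measure. -/
lemma hausdorffMeasure_vadd_submodule_inter_closedBall_lt_top {E : Type*} [NormedAddCommGroup E]
    [NormedSpace ℝ E] [MeasurableSpace E] [BorelSpace E] (W : Submodule ℝ E)
    [FiniteDimensional ℝ W] {m : ℕ} (hW : Module.finrank ℝ W ≤ m) (a c : E) (r : ℝ) :
    μH[(m : ℝ)] ({y | y - a ∈ W} ∩ closedBall c r) < ⊤ := by
  have hiso : Isometry fun w : W => a + (w : E) :=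
    Isometry.of_dist_eq fun x y => by simp [Subtype.dist_eq]
  have hsub : {y | y - a ∈ W} ∩ closedBall c r ⊆
      (fun w : W => a + (w : E)) '' closedBall 0 (r + dist c a) := by
    rintro y ⟨hyW, hyB⟩
    refine ⟨⟨y - a, hyW⟩, ?_, by simp⟩
    have h := dist_triangle y c a
    rw [mem_closedBall] at hyB
    rw [mem_closedBall, dist_zero_right, Submodule.coe_norm, ← dist_eq_norm]
    linarith
  have hhaar := isAddHaarMeasure_hausdorffMeasure (E := W)
  calc μH[(m : ℝ)] ({y | y - a ∈ W} ∩ closedBall c r)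
      ≤ μH[(m : ℝ)] ((fun w : W => a + (w : E)) '' closedBall 0 (r + dist c a)) :=
        measure_mono hsub
    _ = μH[(m : ℝ)] (closedBall (0 : W) (r + dist c a)) :=
        hiso.hausdorffMeasure_image (Or.inl (Nat.cast_nonneg m)) _
    _ ≤ μH[(Module.finrank ℝ W : ℝ)] (closedBall (0 : W) (r + dist c a)) :=
        Measure.hausdorffMeasure_mono (Nat.cast_le.2 hW) _
    _ < ⊤ := (isCompact_closedBall _ _).measure_lt_top

/-- If the differences `y - a`, `y ∈ S`, span a space of dimension at least `k`, then `a` can be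
completed by `k` points of `S` to an affinely independent family. -/
lemma exists_affineIndependent_fin_zero_eq {K V : Type*} [DivisionRing K] [AddCommGroup V]
    [Module K V] [FiniteDimensional K V] {S : Set V} {a : V} (ha : a ∈ S) {k : ℕ}
    (hk : k ≤ Module.finrank K (Submodule.span K ((· - a) '' S))) :
    ∃ x : Fin (k + 1) → V, x 0 = a ∧ (∀ i, x i ∈ S) ∧ AffineIndependent K x := by
  obtain ⟨f, hfS, -, hf⟩ := Submodule.exists_fun_fin_finrank_span_eq K ((· - a) '' S)
  refine ⟨Fin.cons a fun i => f (Fin.castLE hk i) + a, rfl, fun i => ?_, ?_⟩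
  · refine Fin.cases ha (fun j => ?_) i
    obtain ⟨y, hy, hyf⟩ := hfS (Fin.castLE hk j)
    simpa [← hyf] using hy
  · rw [affineIndependent_iff_linearIndependent_vsub K _ 0,
      ← linearIndependent_equiv (finSuccAboveEquiv 0)]
    simpa [Function.comp_def, finSuccAboveEquiv_apply] using
      hf.comp _ (Fin.castLE_injective hk)

/-- The heights of a nondegenerate simplex are positive. -/
lemma AffineIndependent.infDist_affineSpan_image_compl_pos {ι E : Type*} [Finite ι] [Nontrivial ι]
    [NormedAddCommGroup E] [NormedSpace ℝ E] {x : ι → E} (hx : AffineIndependent ℝ x) (i : ι) :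
    0 < infDist (x i) (affineSpan ℝ (x '' {i}ᶜ) : Set E) := by
  have : FiniteDimensional ℝ (affineSpan ℝ (x '' {i}ᶜ)).direction :=
    finiteDimensional_direction_affineSpan_of_finite ℝ (toFinite _)
  have hne : (affineSpan ℝ (x '' {i}ᶜ) : Set E).Nonempty := by
    obtain ⟨j, hj⟩ := exists_ne i
    exact ⟨x j, subset_affineSpan ℝ _ (mem_image_of_mem x hj)⟩
  rw [← (AffineSubspace.closed_of_finiteDimensional _).notMem_iff_infDist_pos hne]
  simpa [compl_eq_univ_sdiff] using hx.notMem_affineSpan_sdiff i univ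

/-- A measure that is infinite on a compact set is infinite on every neighbourhood of some point
of that set. -/
lemma IsCompact.exists_forall_mem_nhds_measure_eq_top {X : Type*} [TopologicalSpace X]
    [MeasurableSpace X] {μ : Measure X} {s : Set X} (hs : IsCompact s) (hμ : μ s = ⊤) :
    ∃ x ∈ s, ∀ U ∈ nhds x, μ U = ⊤ := by
  by_contra! h
  refine (hs.measure_lt_top_of_nhdsWithin fun x hx => ?_).ne hμ
  obtain ⟨U, hU, hUtop⟩ := h x hx
  exact ⟨U, mem_nhdsWithin_of_mem_nhds hU, hUtop.lt_top⟩

/-- **Lemma.** Let `1 ≤ m ≤ N−1`, let `B` be a closed ball in `ℝ^N` and `F ⊆ B` an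
`H^m`-measurable set with `H^m(F) = ∞`.  Then there exist `0 < σ ≤ diam B / 2` and an
`(m+1,(m+3)σ)`-simplex `Δ(x₀,…,x_{m+1})` with vertices in `B` such that
`H^m(B(x₀,σ) ∩ F) = ∞` and `H^m(B(x_i,σ) ∩ F) > 0` for all `i ∈ {1,…,m+1}`. -/
theorem exists_fat_simplex_of_infinite_measure {N m : ℕ} (hm1 : 1 ≤ m) (hmN : m < N)
    (c : EuclideanSpace ℝ (Fin N)) (r : ℝ)
    (F : Set (EuclideanSpace ℝ (Fin N))) (hFmeas : MeasurableSet F)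
    (hFB : F ⊆ Metric.closedBall c r)
    (hinf : μH[(m : ℝ)] F = ⊤) :
    ∃ σ : ℝ, 0 < σ ∧ σ ≤ Metric.diam (Metric.closedBall c r) / 2 ∧
      ∃ x : Fin (m + 2) → EuclideanSpace ℝ (Fin N),
        IsHSimplex N (((m : ℝ) + 3) * σ) x ∧
        (∀ i, x i ∈ Metric.closedBall c r) ∧
        μH[(m : ℝ)] (Metric.closedBall (x 0) σ ∩ F) = ⊤ ∧
        ∀ i : Fin (m + 2), i ≠ 0 →
          0 < μH[(m : ℝ)] (Metric.closedBall (x i) σ ∩ F) := by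
  set ν := (μH[(m : ℝ)] : Measure (EuclideanSpace ℝ (Fin N))).restrict F with hν
  have hνball : ∀ y σ, ν (closedBall y σ) = μH[(m : ℝ)] (closedBall y σ ∩ F) := fun y σ =>
    Measure.restrict_apply measurableSet_closedBall
  obtain ⟨a, -, haν⟩ := (isCompact_closedBall c r).exists_forall_mem_nhds_measure_eq_top
    (μ := ν) (by rw [hνball, inter_eq_right.2 hFB, hinf])
  have ha : a ∈ ν.support := (Measure.mem_support_iff_forall a).2 fun U hU => by simp [haν U hU]
  have hsupp : ν.support ⊆ closedBall c r := Measure.support_subset_of_isClosed isClosed_closedBall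
    (Filter.mem_of_superset (self_mem_ae_restrict hFmeas) hFB)
  have hrank : m + 1 ≤ Module.finrank ℝ (Submodule.span ℝ ((· - a) '' ν.support)) := by
    by_contra! hlt
    refine (hausdorffMeasure_vadd_submodule_inter_closedBall_lt_top _ (Nat.lt_succ_iff.1 hlt)
      a c r).ne (top_unique ?_)
    calc ⊤ = ν univ := by rw [hν, Measure.restrict_apply_univ, hinf]
      _ = ν ν.support := (measure_congr (Filter.eventuallyEq_univ.2 Measure.support_mem_ae)).symm
      _ ≤ μH[(m : ℝ)] ν.support := Measure.restrict_apply_le _ _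
      _ ≤ μH[(m : ℝ)] ({y | y - a ∈ Submodule.span ℝ ((· - a) '' ν.support)} ∩
          closedBall c r) := measure_mono fun y hy =>
        ⟨Submodule.subset_span (mem_image_of_mem _ hy), hsupp hy⟩
  obtain ⟨x, hx0, hxS, hx⟩ := exists_affineIndependent_fin_zero_eq ha hrank
  obtain ⟨j, hj⟩ := Finite.exists_min
    fun i => infDist (x i) (affineSpan ℝ (x '' {i}ᶜ) : Set (EuclideanSpace ℝ (Fin N)))
  have hjpos := hx.infDist_affineSpan_image_compl_pos j
  set h := infDist (x j) (affineSpan ℝ (x '' {j}ᶜ) : Set (EuclideanSpace ℝ (Fin N)))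
  have hdiam : 0 < diam (closedBall c r) :=
    (dist_pos.2 (hx.injective.ne zero_ne_one)).trans_le
      (dist_le_diam_of_mem isBounded_closedBall (hsupp (hxS 0)) (hsupp (hxS 1)))
  have hσ : 0 < min (h / (m + 3)) (diam (closedBall c r) / 2) := by positivity
  refine ⟨_, hσ, min_le_right _ _, x, fun i => ?_, fun i => hsupp (hxS i), ?_, fun i _ => ?_⟩
  · refine le_trans ?_ (hj i)
    rw [← le_div_iff₀' (by positivity)]
    exact min_le_left _ _
  · rw [← hνball, hx0]
    exact haν _ (closedBall_mem_nhds _ hσ)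
  · rw [← hνball]
    exact (Measure.mem_support_iff_forall _).1 (hxS i) _ (closedBall_mem_nhds _ hσ)

end
end

section
/- Let P_0 be an n-dimensional linear subspace of ℝ^N (1 ≤ n < N), let U ⊂ P_0, let q ∈ U and t > 0 with B(q,t) ∩ P_0 ⊂ U, and let g : U → P_0^⊥ be a Lipschitz function whose Lipschitz constant L satisfies 60n·(10^n + 1)·(8n·ω_{n−1}/ω_n)^{n+1} ≤ 1/L. Then γ_g(q,t) ≤ 3·γ̃_g(q,t), where γ̃_g(q,t) := inf over all n-dimensional affine subspaces P of ℝ^N of (1/t^n) ∫_{B(q,t)∩P_0} (dist(u + g(u), P)/t) dH^n(u). Here ω_m is the m-dimensional volume of the m-dimensional unit ball. -/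
open MeasureTheory Metric Set
open scoped NNReal ENNReal

noncomputable section

/-- `ω_m`, the `m`-dimensional volume of the `m`-dimensional unit ball. -/
def unitBallVol (m : ℕ) : ℝ :=
  (MeasureTheory.volume (Metric.closedBall (0 : EuclideanSpace ℝ (Fin m)) 1)).toReal

/-- The `γ`-function `γ_g(q,t)`: best affine `L¹`-approximation of `g` on `B(q,t) ∩ P₀`,
the infimum being taken over all affine maps with values in `P₀ᗮ`. -/
def gammaFn (N n : ℕ) (P₀ : Submodule ℝ (EuclideanSpace ℝ (Fin N)))
    (g : EuclideanSpace ℝ (Fin N) → EuclideanSpace ℝ (Fin N))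
    (q : EuclideanSpace ℝ (Fin N)) (t : ℝ) : ℝ≥0∞ :=
  ⨅ (a : EuclideanSpace ℝ (Fin N) →ᵃ[ℝ] EuclideanSpace ℝ (Fin N)) (_ : ∀ v, a v ∈ P₀ᗮ),
    (ENNReal.ofReal (t ^ n))⁻¹ *
      ∫⁻ u in Metric.closedBall q t ∩ (P₀ : Set (EuclideanSpace ℝ (Fin N))),
        ENNReal.ofReal (‖g u - a u‖ / t) ∂μH[(n : ℝ)]

/-- `P` is (the carrier of) an `n`-dimensional affine subspace of `ℝ^N`. -/
def IsAffDim (N n : ℕ) (P : AffineSubspace ℝ (EuclideanSpace ℝ (Fin N))) : Prop :=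
  (P : Set (EuclideanSpace ℝ (Fin N))).Nonempty ∧ Module.finrank ℝ P.direction = n

/-- The `γ̃`-function: best `L¹`-approximation of the graph point `u + g(u)` on
`B(q,t) ∩ P₀` by `n`-dimensional affine subspaces of `ℝ^N`. -/
def gammaTilde (N n : ℕ) (P₀ : Submodule ℝ (EuclideanSpace ℝ (Fin N)))
    (g : EuclideanSpace ℝ (Fin N) → EuclideanSpace ℝ (Fin N))
    (q : EuclideanSpace ℝ (Fin N)) (t : ℝ) : ℝ≥0∞ :=
  ⨅ (P : AffineSubspace ℝ (EuclideanSpace ℝ (Fin N))) (_ : IsAffDim N n P),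
    (ENNReal.ofReal (t ^ n))⁻¹ *
      ∫⁻ u in Metric.closedBall q t ∩ (P₀ : Set (EuclideanSpace ℝ (Fin N))),
        ENNReal.ofReal (Metric.infDist (u + g u) (P : Set (EuclideanSpace ℝ (Fin N))) / t)
        ∂μH[(n : ℝ)]

section Projection

variable {E : Type*} [NormedAddCommGroup E] [InnerProductSpace ℝ E]

/-- If the orthogonal projection onto `V` shrinks vectors of `W` by at most a factor `3`, where
`V` and `W` have equal dimension, then so does the projection of `Wᗮ` onto `Vᗮ`. -/
lemma norm_le_three_mul_norm_starProjection_orthogonal [FiniteDimensional ℝ E]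
    {V W : Submodule ℝ E} (hdim : Module.finrank ℝ W = Module.finrank ℝ V)
    (hW : ∀ e ∈ W, ‖e‖ ≤ 3 * ‖V.starProjection e‖) {h : E} (hh : h ∈ Wᗮ) :
    ‖h‖ ≤ 3 * ‖Vᗮ.starProjection h‖ := by
  let T : W →ₗ[ℝ] V := V.orthogonalProjectionOnto.toLinearMap ∘ₗ W.subtype
  have hT : ∀ e : W, (T e : E) = V.starProjection e := fun e => rfl
  have hinj : Function.Injective T := by
    refine (injective_iff_map_eq_zero T).2 fun e he => ?_
    have h1 := hW e e.2
    rw [← hT, he] at h1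
    simpa using h1
  obtain ⟨e, he⟩ :=
    (LinearMap.injective_iff_surjective_of_finrank_eq_finrank hdim).1 hinj
      (V.orthogonalProjectionOnto h)
  have hv : V.starProjection (e : E) = V.starProjection h := by
    rw [← hT, he]; rfl
  have hnorm_h := V.norm_sq_eq_add_norm_sq_starProjection h
  have hnorm_e := V.norm_sq_eq_add_norm_sq_starProjection (e : E)
  have hle := hW e e.2
  have hdec_h := V.starProjection_add_starProjection_orthogonal h
  have hdec_e := V.starProjection_add_starProjection_orthogonal (e : E)
  rw [hv] at hnorm_e hle hdec_e
  set v := V.starProjection h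
  set hperp := Vᗮ.starProjection h
  set eperp := Vᗮ.starProjection (e : E)
  have hvV : v ∈ V := V.starProjection_apply_mem h
  have hhperp_mem : hperp ∈ Vᗮ := Vᗮ.starProjection_apply_mem h
  have heperp_mem : eperp ∈ Vᗮ := Vᗮ.starProjection_apply_mem _
  have horth : inner ℝ (v + eperp) (v + hperp) = 0 := by
    rw [hdec_h, hdec_e]; exact hh e e.2
  rw [inner_add_left, inner_add_right, inner_add_right, hhperp_mem v hvV,
    V.inner_left_of_mem_orthogonal hvV heperp_mem, real_inner_self_eq_norm_sq] at horth
  have hcs := abs_le.1 (abs_real_inner_le_norm eperp hperp)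
  have hvv : ‖v‖ ^ 2 ≤ ‖eperp‖ * ‖hperp‖ := by linarith [hcs.1]
  have he9 : ‖eperp‖ ^ 2 ≤ 8 * ‖v‖ ^ 2 := by
    nlinarith [norm_nonneg (e : E), norm_nonneg v]
  have hv8 : ‖v‖ ^ 2 ≤ 8 * ‖hperp‖ ^ 2 := by
    by_contra hcon
    push Not at hcon
    have h1 : (‖v‖ ^ 2) ^ 2 ≤ (‖eperp‖ * ‖hperp‖) ^ 2 := by gcongr
    have h2 : ‖eperp‖ ^ 2 * ‖hperp‖ ^ 2 ≤ 8 * ‖v‖ ^ 2 * ‖hperp‖ ^ 2 := by gcongr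
    nlinarith [sq_nonneg ‖hperp‖]
  exact abs_le_of_sq_le_sq' (by nlinarith) (by positivity) |>.2

lemma norm_starProjection_orthogonal_sub_le_infDist [FiniteDimensional ℝ E]
    {P : AffineSubspace ℝ E} {p : E} (hp : p ∈ P) (x : E) :
    ‖P.directionᗮ.starProjection (x - p)‖ ≤ infDist x (P : Set E) := by
  refine (le_infDist ⟨p, hp⟩).2 fun y hy => ?_
  have h0 : P.directionᗮ.starProjection (y - p) = 0 :=
    Submodule.starProjection_orthogonal_apply_eq_zero
      (AffineSubspace.vsub_mem_direction hy hp)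
  calc ‖P.directionᗮ.starProjection (x - p)‖
      = ‖P.directionᗮ.starProjection (x - y)‖ := by
        rw [← sub_add_sub_cancel x y p, map_add, h0, add_zero]
    _ ≤ ‖x - y‖ := Submodule.norm_starProjection_apply_le _ _
    _ = dist x y := (dist_eq_norm x y).symm

/-- An affine subspace making a moderate angle with `W` is the graph of an affine map into `Wᗮ`,
and the vertical distance to it is at most three times the distance. -/
lemma exists_affineMap_norm_sub_le_three_mul_infDist [FiniteDimensional ℝ E]
    {P : AffineSubspace ℝ E} (hP : (P : Set E).Nonempty) {W : Submodule ℝ E}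
    (hdim : Module.finrank ℝ W = Module.finrank ℝ P.direction)
    (hW : ∀ e ∈ W, ‖e‖ ≤ 3 * ‖P.direction.starProjection e‖) :
    ∃ a : E →ᵃ[ℝ] E, (∀ v, a v ∈ Wᗮ) ∧
      ∀ u, ∀ y ∈ Wᗮ, ‖y - a u‖ ≤ 3 * infDist (u + y) (P : Set E) := by
  obtain ⟨p, hp⟩ := hP
  have hdisj : Disjoint Wᗮ P.direction := by
    refine Submodule.disjoint_def.2 fun x hxW hxP => ?_
    have h := norm_le_three_mul_norm_starProjection_orthogonal hdim hW hxW
    rw [Submodule.starProjection_orthogonal_apply_eq_zero hxP] at h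
    simpa using h
  have hcompl : IsCompl Wᗮ P.direction := by
    refine Submodule.isCompl_iff_disjoint _ _ ?_ |>.2 hdisj
    have := W.finrank_add_finrank_orthogonal
    omega
  let π := Wᗮ.projection P.direction hcompl
  have hπ : ∀ x, π x ∈ Wᗮ := fun x => Submodule.projection_apply_mem hcompl x
  refine ⟨((-π).toAffineMap + AffineMap.const ℝ E (π p)), fun v => ?_, fun u y hy => ?_⟩
  · exact Wᗮ.add_mem (Wᗮ.neg_mem (hπ v)) (hπ p)
  · have hau : ((-π).toAffineMap + AffineMap.const ℝ E (π p)) u = π (p - u) := by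
      simp [sub_eq_neg_add]
    have hmem : y - π (p - u) ∈ Wᗮ := Wᗮ.sub_mem hy (hπ _)
    have hV : u - p + π (p - u) ∈ P.direction := by
      have h := Submodule.projection_add_projection_eq_self hcompl (p - u)
      have hsub : u - p + π (p - u) = -(P.direction.projection Wᗮ hcompl.symm (p - u)) := by
        rw [← neg_sub p u, neg_add_eq_sub, ← neg_sub]
        exact congrArg Neg.neg (sub_eq_of_eq_add' h.symm)
      rw [hsub]
      exact P.direction.neg_mem (Submodule.projection_apply_mem hcompl.symm _)
    rw [hau]
    refine (norm_le_three_mul_norm_starProjection_orthogonal hdim hW hmem).trans ?_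
    have hsplit : u + y - p = (y - π (p - u)) + (u - p + π (p - u)) := by abel
    have h := norm_starProjection_orthogonal_sub_le_infDist hp (u + y)
    rw [hsplit, map_add, Submodule.starProjection_orthogonal_apply_eq_zero hV, add_zero] at h
    gcongr

lemma reflection_orthogonal_span_singleton (w x : E) :
    (ℝ ∙ w)ᗮ.reflection x = x - (2 * (inner ℝ w x / ‖w‖ ^ 2)) • w := by
  rw [Submodule.reflection_orthogonal_apply, Submodule.reflection_singleton_apply, neg_sub, mul_smul,
    two_smul, two_smul]
  rfl

/-- If `P` meets `e` at a large angle, two points differing by `s • e` up to a small error cannot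
both be close to `P`. -/
lemma abs_div_two_le_infDist_add_infDist [FiniteDimensional ℝ E] {P : AffineSubspace ℝ E}
    (hP : (P : Set E).Nonempty) {e : E} (he : ‖e‖ = 1)
    (hVe : 3 * ‖P.direction.starProjection e‖ < ‖e‖) {x y w : E} {s : ℝ}
    (hxy : x - y = s • e + w) (hw : ‖w‖ ≤ |s| / 6) :
    |s| / 2 ≤ infDist x (P : Set E) + infDist y (P : Set E) := by
  obtain ⟨p, hp⟩ := hP
  have hx := norm_starProjection_orthogonal_sub_le_infDist hp x
  have hy := norm_starProjection_orthogonal_sub_le_infDist hp y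
  set Q := P.directionᗮ.starProjection with hQ
  have hQe : 2 / 3 ≤ ‖Q e‖ := by
    have h1 := norm_add_le (P.direction.starProjection e) (Q e)
    rw [hQ, P.direction.starProjection_add_starProjection_orthogonal e, ← hQ] at h1
    linarith
  have hQw : ‖Q w‖ ≤ ‖w‖ := Submodule.norm_starProjection_apply_le _ _
  have hsplit : s • Q e = Q (x - p) - Q (y - p) - Q w := by
    rw [← map_sub, sub_sub_sub_cancel_right, hxy, map_add, map_smul, add_sub_cancel_right]
  have h2 : |s| * ‖Q e‖ ≤ ‖Q (x - p)‖ + ‖Q (y - p)‖ + ‖Q w‖ := by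
    rw [← Real.norm_eq_abs, ← norm_smul, hsplit]
    exact (norm_sub_le _ _).trans (by gcongr; exact norm_sub_le _ _)
  nlinarith [abs_nonneg s]

end Projection

section Reflection

variable {E : Type*} [NormedAddCommGroup E] [InnerProductSpace ℝ E]

lemma add_reflection_sub_mem_iff {W : Submodule ℝ E} {q w : E} (hq : q ∈ W) (hw : w ∈ W) (t : ℝ)
    (u : E) : q + (ℝ ∙ w)ᗮ.reflection (u - q) ∈ closedBall q t ∩ (W : Set E) ↔
      u ∈ closedBall q t ∩ (W : Set E) := by
  refine and_congr ?_ ?_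
  · rw [mem_closedBall_iff_norm, mem_closedBall_iff_norm, add_sub_cancel_left,
      LinearIsometryEquiv.norm_map]
  · rw [SetLike.mem_coe, SetLike.mem_coe, reflection_orthogonal_span_singleton,
      Submodule.add_mem_iff_right _ hq, Submodule.sub_mem_iff_left _ (W.smul_mem _ hw),
      Submodule.sub_mem_iff_left _ hq]

variable [MeasurableSpace E] [BorelSpace E]

lemma setLIntegral_comp_reflection {W : Submodule ℝ E} {q w : E} (hq : q ∈ W) (hw : w ∈ W)
    (t d : ℝ) (f : E → ℝ≥0∞) :
    ∫⁻ u in closedBall q t ∩ (W : Set E), f (q + (ℝ ∙ w)ᗮ.reflection (u - q)) ∂μH[d] =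
      ∫⁻ u in closedBall q t ∩ (W : Set E), f u ∂μH[d] := by
  let R : E ≃ᵢ E := ((IsometryEquiv.subRight q).trans
    (ℝ ∙ w)ᗮ.reflection.toIsometryEquiv).trans (IsometryEquiv.addLeft q)
  have hR : ∀ u, R u = q + (ℝ ∙ w)ᗮ.reflection (u - q) := fun u => rfl
  have h := (R.measurePreserving_hausdorffMeasure d).setLIntegral_comp_preimage_emb
    R.toHomeomorph.measurableEmbedding f (closedBall q t ∩ (W : Set E))
  have hpre : R ⁻¹' (closedBall q t ∩ (W : Set E)) = closedBall q t ∩ (W : Set E) := by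
    ext u
    rw [mem_preimage, hR]
    exact add_reflection_sub_mem_iff hq hw t u
  rw [hpre] at h
  exact h

/-- All directions contribute equally to the first absolute moment of a ball. -/
lemma setLIntegral_abs_inner_eq {W : Submodule ℝ E} {q e w : E} (hq : q ∈ W) (he : e ∈ W)
    (hew : w ∈ W) (hee : ‖e‖ = ‖w‖) (t d : ℝ) (c : ℝ) :
    ∫⁻ u in closedBall q t ∩ (W : Set E), ENNReal.ofReal (|inner ℝ e (u - q)| / c) ∂μH[d] =
      ∫⁻ u in closedBall q t ∩ (W : Set E), ENNReal.ofReal (|inner ℝ w (u - q)| / c) ∂μH[d] := by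
  rw [← setLIntegral_comp_reflection hq (W.sub_mem he hew) t d
    fun u => ENNReal.ofReal (|inner ℝ w (u - q)| / c)]
  have key : ∀ x : E, inner ℝ w ((ℝ ∙ (e - w))ᗮ.reflection x) = inner ℝ e x := fun x => by
    have h := LinearIsometryEquiv.inner_map_map (ℝ ∙ (e - w))ᗮ.reflection e x
    rwa [Submodule.reflection_sub hee] at h
  simp only [add_sub_cancel_left, key]

lemma setLIntegral_norm_sub_le {W : Submodule ℝ E} [FiniteDimensional ℝ W] {q e : E}
    (hq : q ∈ W) (he : e ∈ W) (he1 : ‖e‖ = 1) (t d : ℝ) {c : ℝ} (hc : 0 < c) :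
    ∫⁻ u in closedBall q t ∩ (W : Set E), ENNReal.ofReal (‖u - q‖ / c) ∂μH[d] ≤
      Module.finrank ℝ W *
        ∫⁻ u in closedBall q t ∩ (W : Set E),
          ENNReal.ofReal (|inner ℝ e (u - q)| / c) ∂μH[d] := by
  let b := stdOrthonormalBasis ℝ W
  have hmeas : ∀ v : E, Measurable fun u => ENNReal.ofReal (|inner ℝ v (u - q)| / c) := fun v =>
    ENNReal.measurable_ofReal.comp (Continuous.measurable (by fun_prop))
  have hTmeas : MeasurableSet (closedBall q t ∩ (W : Set E)) :=
    isClosed_closedBall.measurableSet.inter W.closed_of_finiteDimensional.measurableSet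
  have hS : ∀ u ∈ closedBall q t ∩ (W : Set E), ENNReal.ofReal (‖u - q‖ / c) ≤
      ∑ i, ENNReal.ofReal (|inner ℝ (b i : E) (u - q)| / c) := by
    rintro u ⟨-, hu⟩
    rw [← ENNReal.ofReal_sum_of_nonneg fun i _ => by positivity, ← Finset.sum_div]
    refine ENNReal.ofReal_le_ofReal (div_le_div_of_nonneg_right ?_ hc.le)
    let x : W := ⟨u - q, W.sub_mem hu hq⟩
    calc ‖u - q‖ = ‖x‖ := rfl
      _ = ‖∑ i, inner ℝ (b i) x • b i‖ := by rw [b.sum_repr' x]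
      _ ≤ ∑ i, ‖inner ℝ (b i) x • b i‖ := norm_sum_le _ _
      _ = ∑ i, |inner ℝ (b i : E) (u - q)| := by
        refine Finset.sum_congr rfl fun i _ => ?_
        rw [norm_smul, b.orthonormal.1 i, mul_one, Real.norm_eq_abs]
        rfl
  calc _ ≤ ∫⁻ u in closedBall q t ∩ (W : Set E),
        ∑ i, ENNReal.ofReal (|inner ℝ (b i : E) (u - q)| / c) ∂μH[d] := by
        refine lintegral_mono_ae ?_
        filter_upwards [ae_restrict_mem hTmeas] with u hu using hS u hu
    _ = ∑ i, ∫⁻ u in closedBall q t ∩ (W : Set E),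
        ENNReal.ofReal (|inner ℝ (b i : E) (u - q)| / c) ∂μH[d] :=
        lintegral_finsetSum _ fun i _ => hmeas _
    _ = ∑ _i : Fin (Module.finrank ℝ W), ∫⁻ u in closedBall q t ∩ (W : Set E),
        ENNReal.ofReal (|inner ℝ e (u - q)| / c) ∂μH[d] :=
        Finset.sum_congr rfl fun i _ =>
          setLIntegral_abs_inner_eq hq (b i).2 he ((b.orthonormal.1 i).trans he1.symm) t d c
    _ = _ := by rw [Finset.sum_const, Finset.card_univ, Fintype.card_fin, nsmul_eq_mul]

end Reflection

lemma unitBallVol_eq (m : ℕ) :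
    unitBallVol m = √Real.pi ^ m / Real.Gamma (m / 2 + 1) := by
  have hG : 0 < Real.Gamma ((m : ℝ) / 2 + 1) := Real.Gamma_pos_of_pos (by positivity)
  rw [unitBallVol]
  rcases m with _ | m
  · have huniv : closedBall (0 : EuclideanSpace ℝ (Fin 0)) 1 = univ :=
      eq_univ_of_forall fun x => by simp [Subsingleton.elim x 0]
    rw [huniv, volume_euclideanSpace_eq_dirac]
    simp
  · rw [EuclideanSpace.volume_closedBall, Fintype.card_fin, ENNReal.ofReal_one, one_pow, one_mul,
      ENNReal.toReal_ofReal (by positivity)]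

lemma one_le_eight_mul_unitBallVol_ratio {n : ℕ} (hn : 1 ≤ n) :
    1 ≤ 8 * n * unitBallVol (n - 1) / unitBallVol n := by
  obtain ⟨m, rfl⟩ : ∃ m, n = m + 1 := ⟨n - 1, by omega⟩
  have hpi : 0 < √Real.pi := Real.sqrt_pos.2 Real.pi_pos
  have hpi2 : √Real.pi ≤ 2 := by
    rw [Real.sqrt_le_left (by norm_num)]; linarith [Real.pi_le_four]
  have hG : 0 < Real.Gamma ((m : ℝ) / 2 + 1) := Real.Gamma_pos_of_pos (by positivity)
  have hGsucc : 0 < Real.Gamma (((m + 1 : ℕ) : ℝ) / 2 + 1) := Real.Gamma_pos_of_pos (by positivity)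
  have hGamma : √Real.pi * Real.Gamma ((m : ℝ) / 2 + 1) ≤
      8 * Real.Gamma (((m + 1 : ℕ) : ℝ) / 2 + 1) := by
    have h32 : Real.Gamma (1 / 2 + 1) = 1 / 2 * √Real.pi := by
      rw [Real.Gamma_add_one (by norm_num), Real.Gamma_one_half_eq]
    rcases m with _ | _ | m
    · norm_num at h32 ⊢
      rw [h32]
      linarith
    · norm_num at h32 ⊢
      rw [h32]
      nlinarith [Real.mul_self_sqrt Real.pi_pos.le]
    · have hmono : Real.Gamma (((m + 2 : ℕ) : ℝ) / 2 + 1) ≤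
          Real.Gamma (((m + 2 + 1 : ℕ) : ℝ) / 2 + 1) := by
        refine Real.Gamma_strictMonoOn_Ici.monotoneOn ?_ ?_ ?_
        · rw [mem_Ici]; push_cast; linarith [(Nat.cast_nonneg m : (0 : ℝ) ≤ m)]
        · rw [mem_Ici]; push_cast; linarith [(Nat.cast_nonneg m : (0 : ℝ) ≤ m)]
        · push_cast; linarith
      calc √Real.pi * Real.Gamma (((m + 2 : ℕ) : ℝ) / 2 + 1)
          ≤ 8 * Real.Gamma (((m + 2 : ℕ) : ℝ) / 2 + 1) := by
            gcongr; linarith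
        _ ≤ _ := by gcongr
  rw [unitBallVol_eq, unitBallVol_eq, Nat.add_sub_cancel, le_div_iff₀ (by positivity), one_mul,
    mul_div_assoc', div_le_div_iff₀ hGsucc hG, pow_succ]
  have hcast : (1 : ℝ) ≤ ((m + 1 : ℕ) : ℝ) := by exact_mod_cast hn
  calc √Real.pi ^ m * √Real.pi * Real.Gamma ((m : ℝ) / 2 + 1)
      = √Real.pi ^ m * (√Real.pi * Real.Gamma ((m : ℝ) / 2 + 1)) := by ring
    _ ≤ √Real.pi ^ m * (((m + 1 : ℕ) : ℝ) * (8 * Real.Gamma (((m + 1 : ℕ) : ℝ) / 2 + 1))) := by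
        refine mul_le_mul_of_nonneg_left ?_ (by positivity)
        exact hGamma.trans (le_mul_of_one_le_left (by positivity) hcast)
    _ = _ := by ring

lemma lipschitz_constant_bounds {n : ℕ} (hn : 1 ≤ n) {L : ℝ} (hL : 0 < L)
    (hLbound : 60 * n * ((10 : ℝ) ^ n + 1) *
        (8 * n * unitBallVol (n - 1) / unitBallVol n) ^ (n + 1) ≤ 1 / L) :
    L ≤ 1 / 6 ∧ L * n ≤ 1 := by
  have hn1 : (1 : ℝ) ≤ n := by exact_mod_cast hn
  have h60 : 60 * (n : ℝ) ≤ 1 / L := by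
    refine le_trans ?_ hLbound
    rw [mul_assoc]
    refine le_mul_of_one_le_right (by positivity) (one_le_mul_of_one_le_of_one_le ?_ ?_)
    · linarith [pow_nonneg (by norm_num : (0 : ℝ) ≤ 10) n]
    · exact one_le_pow₀ (one_le_eight_mul_unitBallVol_ratio hn)
  rw [le_div_iff₀ hL] at h60
  constructor <;> nlinarith

/-- **Lemma.** Let `P₀` be an `n`-dimensional linear subspace of `ℝ^N`, `U ⊆ P₀`,
`q ∈ U`, `t > 0` with `B(q,t) ∩ P₀ ⊆ U`, and let `g : U → P₀ᗮ` be Lipschitz with constant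
`L` satisfying `60n(10^n+1)(8n ω_{n−1}/ω_n)^{n+1} ≤ 1/L`.  Then
`γ_g(q,t) ≤ 3 γ̃_g(q,t)`. -/
theorem gamma_le_three_gammaTilde {N n : ℕ} (hn : 1 ≤ n) (hnN : n < N)
    (P₀ : Submodule ℝ (EuclideanSpace ℝ (Fin N))) (hP₀ : Module.finrank ℝ P₀ = n)
    (U : Set (EuclideanSpace ℝ (Fin N))) (hU : U ⊆ (P₀ : Set (EuclideanSpace ℝ (Fin N))))
    (q : EuclideanSpace ℝ (Fin N)) (hq : q ∈ U) (t : ℝ) (ht : 0 < t)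
    (hBU : Metric.closedBall q t ∩ (P₀ : Set (EuclideanSpace ℝ (Fin N))) ⊆ U)
    (g : EuclideanSpace ℝ (Fin N) → EuclideanSpace ℝ (Fin N))
    (hgval : ∀ u ∈ U, g u ∈ P₀ᗮ)
    (L : ℝ) (hL : 0 < L)
    (hLip : ∀ u ∈ U, ∀ v ∈ U, ‖g u - g v‖ ≤ L * ‖u - v‖)
    (hLbound : 60 * n * ((10 : ℝ) ^ n + 1) *
        (8 * n * unitBallVol (n - 1) / unitBallVol n) ^ (n + 1) ≤ 1 / L) :
    gammaFn N n P₀ g q t ≤ 3 * gammaTilde N n P₀ g q t := by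
  have hqP : q ∈ P₀ := hU hq
  set T := closedBall q t ∩ (P₀ : Set (EuclideanSpace ℝ (Fin N))) with hT
  have hTclosed : IsClosed T :=
    isClosed_closedBall.inter P₀.closed_of_finiteDimensional
  have hLn : L ≤ 1 / 6 ∧ L * n ≤ 1 := lipschitz_constant_bounds hn hL hLbound
  rw [gammaTilde, ENNReal.mul_iInf_of_ne (by norm_num) (by norm_num)]
  refine le_iInf fun P => ?_
  rw [ENNReal.mul_iInf_of_ne (by norm_num) (by norm_num)]
  refine le_iInf fun ⟨hPne, hPdim⟩ => ?_
  rw [mul_left_comm]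
  suffices h : ∃ a : EuclideanSpace ℝ (Fin N) →ᵃ[ℝ] EuclideanSpace ℝ (Fin N),
      (∀ v, a v ∈ P₀ᗮ) ∧ ∫⁻ u in T, ENNReal.ofReal (‖g u - a u‖ / t) ∂μH[(n : ℝ)] ≤
        3 * ∫⁻ u in T, ENNReal.ofReal (infDist (u + g u)
          (P : Set (EuclideanSpace ℝ (Fin N))) / t) ∂μH[(n : ℝ)] by
    obtain ⟨a, ha, hle⟩ := h
    exact (iInf₂_le a ha).trans (by gcongr)
  by_cases hsteep : ∀ e ∈ P₀, ‖e‖ ≤ 3 * ‖P.direction.starProjection e‖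
  · obtain ⟨a, ha, hle⟩ :=
      exists_affineMap_norm_sub_le_three_mul_infDist hPne (hP₀.trans hPdim.symm) hsteep
    refine ⟨a, ha, ?_⟩
    rw [← lintegral_const_mul' _ _ (by norm_num)]
    refine lintegral_mono_ae ?_
    filter_upwards [ae_restrict_mem hTclosed.measurableSet] with u hu
    rw [← ENNReal.ofReal_ofNat 3, ← ENNReal.ofReal_mul (by norm_num), mul_div_assoc']
    exact ENNReal.ofReal_le_ofReal
      (div_le_div_of_nonneg_right (hle u (g u) (hgval u (hBU hu))) ht.le)
  · push Not at hsteep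
    obtain ⟨e₀, he₀, hlt⟩ := hsteep
    obtain ⟨e, he, he1, hlt⟩ : ∃ e ∈ P₀, ‖e‖ = 1 ∧ 3 * ‖P.direction.starProjection e‖ < ‖e‖ := by
      have hpos : 0 < ‖e₀‖ := lt_of_le_of_lt (by positivity) hlt
      refine ⟨‖e₀‖⁻¹ • e₀, P₀.smul_mem _ he₀, norm_smul_inv_norm (𝕜 := ℝ) (norm_pos_iff.1 hpos), ?_⟩
      rw [map_smul, norm_smul, norm_smul, mul_left_comm]
      gcongr
      simpa using hpos
    refine ⟨AffineMap.const ℝ _ (g q), fun v => hgval q hq, ?_⟩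
    set f : EuclideanSpace ℝ (Fin N) → ℝ≥0∞ := fun u =>
      ENNReal.ofReal (infDist (u + g u) (P : Set (EuclideanSpace ℝ (Fin N))) / t) with hf
    have hgT : ContinuousOn g T :=
      (LipschitzOnWith.of_dist_le_mul (K := L.toNNReal) fun u hu v hv => by
        rw [dist_eq_norm, dist_eq_norm, Real.coe_toNNReal _ hL.le]
        exact hLip u (hBU hu) v (hBU hv)).continuousOn
    have hfmeas : AEMeasurable f (μH[(n : ℝ)].restrict T) :=
      ContinuousOn.aemeasurable (ENNReal.continuous_ofReal.comp_continuousOn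
        (((continuous_infDist_pt _).comp_continuousOn (continuousOn_id.add hgT)).div_const t))
        hTclosed.measurableSet
    have hRf := setLIntegral_comp_reflection hqP he t (n : ℝ) f
    have hpair : ∀ u ∈ T, ENNReal.ofReal (|inner ℝ e (u - q)| / t) ≤
        f u + f (q + (ℝ ∙ e)ᗮ.reflection (u - q)) := by
      intro u hu
      have hRu := (add_reflection_sub_mem_iff hqP he t u).2 hu
      set v := q + (ℝ ∙ e)ᗮ.reflection (u - q) with hv
      have huv : u - v = (2 * inner ℝ e (u - q)) • e := by
        rw [hv, reflection_orthogonal_span_singleton, he1, one_pow, div_one]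
        abel
      have hnorm : ‖g u - g v‖ ≤ |2 * inner ℝ e (u - q)| / 6 := by
        have h1 := hLip u (hBU hu) v (hBU hRu)
        rw [huv, norm_smul, he1, mul_one, Real.norm_eq_abs] at h1
        nlinarith [abs_nonneg (2 * inner ℝ e (u - q))]
      have h2 := abs_div_two_le_infDist_add_infDist hPne he1 hlt
        (x := u + g u) (y := v + g v) (by rw [← huv]; abel) hnorm
      rw [hf, ← ENNReal.ofReal_add (div_nonneg infDist_nonneg ht.le)
        (div_nonneg infDist_nonneg ht.le), ← add_div]
      refine ENNReal.ofReal_le_ofReal (div_le_div_of_nonneg_right ?_ ht.le)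
      rw [abs_mul, abs_two] at h2
      linarith
    have hinner : ∫⁻ u in T, ENNReal.ofReal (|inner ℝ e (u - q)| / t) ∂μH[(n : ℝ)] ≤
        3 * ∫⁻ u in T, f u ∂μH[(n : ℝ)] := by
      calc _ ≤ ∫⁻ u in T, (f u + f (q + (ℝ ∙ e)ᗮ.reflection (u - q))) ∂μH[(n : ℝ)] := by
            refine lintegral_mono_ae ?_
            filter_upwards [ae_restrict_mem hTclosed.measurableSet] with u hu using hpair u hu
        _ = 2 * ∫⁻ u in T, f u ∂μH[(n : ℝ)] := by
            rw [lintegral_add_left' hfmeas, hRf, two_mul]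
        _ ≤ _ := by gcongr; norm_num
    have hmoment := setLIntegral_norm_sub_le hqP he he1 t (n : ℝ) ht
    rw [hP₀] at hmoment
    calc ∫⁻ u in T, ENNReal.ofReal (‖g u - g q‖ / t) ∂μH[(n : ℝ)]
        ≤ ∫⁻ u in T, ENNReal.ofReal L * ENNReal.ofReal (‖u - q‖ / t) ∂μH[(n : ℝ)] := by
          refine lintegral_mono_ae ?_
          filter_upwards [ae_restrict_mem hTclosed.measurableSet] with u hu
          rw [← ENNReal.ofReal_mul hL.le, mul_div_assoc']
          exact ENNReal.ofReal_le_ofReal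
            (div_le_div_of_nonneg_right (hLip u (hBU hu) q hq) ht.le)
      _ = ENNReal.ofReal L * ∫⁻ u in T, ENNReal.ofReal (‖u - q‖ / t) ∂μH[(n : ℝ)] :=
          lintegral_const_mul' _ _ ENNReal.ofReal_ne_top
      _ ≤ ENNReal.ofReal L * (n *
          ∫⁻ u in T, ENNReal.ofReal (|inner ℝ e (u - q)| / t) ∂μH[(n : ℝ)]) := by gcongr
      _ = ENNReal.ofReal (L * n) *
          ∫⁻ u in T, ENNReal.ofReal (|inner ℝ e (u - q)| / t) ∂μH[(n : ℝ)] := by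
          rw [ENNReal.ofReal_mul hL.le, ENNReal.ofReal_natCast, mul_assoc]
      _ ≤ 1 * ∫⁻ u in T, ENNReal.ofReal (|inner ℝ e (u - q)| / t) ∂μH[(n : ℝ)] := by
          gcongr
          exact ENNReal.ofReal_le_one.2 hLn.2
      _ ≤ _ := by rw [one_mul]; exact hinner

end
end
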